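/- arXiv:1803.00965 — 7 statements merged into one kernel-verified Lean document; each statement's English description precedes it below -/
import Mathlib

section
/- For every subgroup D of (ℤ/2ⁿℤ, +), every element v ∈ ℤ/2ⁿℤ, and every j ∈ {1,…,δ}, the j-th box of the coset v + D = {v + d : d ∈ D} has the same kind as the j-th box of D: it is white if and only if the j-th box of D is white, black if and only if it is black, and ruled if and only if it is ruled. -/
/-- The `j`-th brick projection of `x ∈ ℤ/2^{mδ}ℤ`: the `j`-th block of `m` consecutive
binary digits of `x`, i.e. `⌊x̄ / 2^{m·j}⌋ mod 2^m` (0-indexed `j`). -/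
def projZ (m δ : ℕ) (j : Fin δ) (x : ZMod (2 ^ (m * δ))) : ZMod (2 ^ m) :=
  ((x.val / 2 ^ (m * (j : ℕ))) : ℕ)

/-- A box is white if it is a singleton. -/
def IsWhite {α : Type*} (S : Set α) : Prop := ∃ a, S = {a}

/-- A box is black if it is everything. -/
def IsBlack {α : Type*} (S : Set α) : Prop := S = Set.univ

/-- A box is ruled if it is neither white nor black. -/
def IsRuled {α : Type*} (S : Set α) : Prop := ¬ IsWhite S ∧ ¬ IsBlack S

/-!
A subgroup `D` of `ℤ/pⁿℤ` either contains `p ^ k` or consists of multiples of `p ^ k`. In the first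
case, adding suitable multiples of `p ^ k` realizes every value of the digits in positions
`k, …, k + m - 1` on every coset of `D`. In the second case, adding an element of `D` to `v` sends
no carry into these positions, so their values simply add modulo `p ^ m`. Either way the box of
`v + D` is a translate of the box of `D`.
-/

open scoped Pointwise

section Kind

variable {G α : Type*} [AddGroup G] [AddAction G α] (g : G) (S : Set α)

lemma isWhite_vadd_iff : IsWhite (g +ᵥ S) ↔ IsWhite S := by
  constructor
  · rintro ⟨a, ha⟩
    exact ⟨-g +ᵥ a, by rw [← Set.vadd_set_singleton, ← ha, neg_vadd_vadd]⟩
  · rintro ⟨a, rfl⟩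
    exact ⟨g +ᵥ a, Set.vadd_set_singleton⟩

lemma isBlack_vadd_iff : IsBlack (g +ᵥ S) ↔ IsBlack S :=
  Set.vadd_set_eq_univ

lemma isRuled_vadd_iff : IsRuled (g +ᵥ S) ↔ IsRuled S :=
  and_congr (isWhite_vadd_iff g S).not (isBlack_vadd_iff g S).not

end Kind

lemma natCast_pow_mem_or_forall_pow_dvd_val {p n : ℕ} [Fact p.Prime] (k : ℕ)
    (D : AddSubgroup (ZMod (p ^ n))) :
    ((p ^ k : ℕ) : ZMod (p ^ n)) ∈ D ∨ ∀ d ∈ D, p ^ k ∣ d.val := by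
  obtain ⟨g, hg⟩ := Int.subgroup_cyclic (D.comap (Int.castAddHom (ZMod (p ^ n))))
  have natCast_mem_iff (a : ℕ) : (a : ZMod (p ^ n)) ∈ D ↔ g ∣ (a : ℤ) := by
    rw [← Int.mem_zmultiples_iff, AddSubgroup.zmultiples_eq_closure, ← hg]
    simp only [AddSubgroup.mem_comap, Int.coe_castAddHom, Int.cast_natCast]
  have g_dvd : g ∣ (p : ℤ) ^ n := by
    rw [← Nat.cast_pow, ← natCast_mem_iff, ZMod.natCast_self]
    exact D.zero_mem
  obtain ⟨a, -, g_assoc⟩ :=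
    (dvd_prime_pow (Nat.prime_iff_prime_int.1 (Fact.out : p.Prime)) n).1 g_dvd
  rcases le_total a k with hak | hka
  · left
    rw [natCast_mem_iff, Nat.cast_pow]
    exact g_assoc.dvd.trans (pow_dvd_pow _ hak)
  · right
    intro d hd
    have g_dvd_val : g ∣ (d.val : ℤ) := by rwa [← natCast_mem_iff, ZMod.natCast_zmod_val]
    exact_mod_cast (pow_dvd_pow (p : ℤ) hka).trans (g_assoc.symm.dvd.trans g_dvd_val)

/-- The block of `m` consecutive base-`b` digits of the canonical representative of `x`, starting at
position `k` (the units digit has position `0`). The brick projection `projZ m δ j` is the case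
`b = 2`, `k = m * j`. -/
def digitBlock (b k m : ℕ) {N : ℕ} (x : ZMod N) : ZMod (b ^ m) :=
  (x.val / b ^ k : ℕ)

section DigitBlock

variable {b k m N : ℕ} [NeZero N]

lemma digitBlock_add_natCast_pow_mul (hN : b ^ (k + m) ∣ N) (x : ZMod N) (t : ℕ) :
    digitBlock b k m (x + ((b ^ k * t : ℕ) : ZMod N)) = digitBlock b k m x + t := by
  have pow_k_pos : 0 < b ^ k :=
    Nat.pos_of_dvd_of_pos ((pow_dvd_pow b (k.le_add_right m)).trans hN) (NeZero.pos N)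
  obtain ⟨e, N_eq⟩ := hN
  have mod_div (a : ℕ) : (a + b ^ k * t) % N / b ^ k = (a / b ^ k + t) % (b ^ m * e) := by
    rw [N_eq, pow_add, mul_assoc, Nat.mod_mul_right_div_self, Nat.add_mul_div_left _ _ pow_k_pos]
  have val_add : (x + ((b ^ k * t : ℕ) : ZMod N)).val = (x.val + b ^ k * t) % N := by
    rw [← ZMod.val_natCast, Nat.cast_add, ZMod.natCast_zmod_val]
  rw [digitBlock, digitBlock, val_add, mod_div, ← Nat.cast_add, ZMod.natCast_eq_natCast_iff]
  exact Nat.mod_mod_of_dvd _ (Nat.dvd_mul_right _ _)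

lemma digitBlock_add_of_pow_dvd_val (hN : b ^ (k + m) ∣ N) (x : ZMod N) {d : ZMod N}
    (hd : b ^ k ∣ d.val) :
    digitBlock b k m (x + d) = digitBlock b k m x + digitBlock b k m d := by
  obtain ⟨t, ht⟩ := hd
  have d_eq : d = (b ^ k * t : ℕ) := by rw [← ht, ZMod.natCast_zmod_val]
  have block_d : digitBlock b k m d = t := by
    rw [d_eq, ← zero_add (Nat.cast _), digitBlock_add_natCast_pow_mul hN]
    simp [digitBlock]
  rw [block_d, d_eq, digitBlock_add_natCast_pow_mul hN]

lemma digitBlock_image_vadd_eq_univ (hN : b ^ (k + m) ∣ N) {D : AddSubgroup (ZMod N)}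
    (hD : ((b ^ k : ℕ) : ZMod N) ∈ D) (v : ZMod N) :
    digitBlock b k m '' (v +ᵥ (D : Set (ZMod N))) = Set.univ := by
  have : NeZero (b ^ m) :=
    ⟨ne_zero_of_dvd_ne_zero (NeZero.ne N) ((pow_dvd_pow b (m.le_add_left k)).trans hN)⟩
  refine Set.eq_univ_of_forall fun y ↦ ?_
  let t := (y - digitBlock b k m v).val
  have mem : ((b ^ k * t : ℕ) : ZMod N) ∈ D := by
    rw [mul_comm, Nat.cast_mul, ← nsmul_eq_mul]
    exact D.nsmul_mem hD t
  refine ⟨_, Set.vadd_mem_vadd_set mem, ?_⟩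
  rw [vadd_eq_add, digitBlock_add_natCast_pow_mul hN, ZMod.natCast_zmod_val, add_sub_cancel]

end DigitBlock

lemma digitBlock_image_vadd {p k m n : ℕ} [Fact p.Prime] (hkm : k + m ≤ n)
    (D : AddSubgroup (ZMod (p ^ n))) (v : ZMod (p ^ n)) :
    digitBlock p k m '' (v +ᵥ (D : Set (ZMod (p ^ n)))) =
      digitBlock p k m v +ᵥ digitBlock p k m '' (D : Set (ZMod (p ^ n))) := by
  have hN : p ^ (k + m) ∣ p ^ n := pow_dvd_pow p hkm
  rcases natCast_pow_mem_or_forall_pow_dvd_val k D with pow_mem | pow_dvd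
  · have image_eq_univ := digitBlock_image_vadd_eq_univ hN pow_mem
    rw [image_eq_univ v, ← zero_vadd (ZMod (p ^ n)) (D : Set (ZMod (p ^ n))), image_eq_univ 0,
      Set.vadd_set_univ]
  · simp only [← Set.image_vadd, Set.image_image, vadd_eq_add]
    exact Set.image_congr fun d hd ↦ digitBlock_add_of_pow_dvd_val hN v (pow_dvd d hd)

theorem stmt_2_general {p k m n : ℕ} [Fact p.Prime] (hkm : k + m ≤ n)
    (D : AddSubgroup (ZMod (p ^ n))) (v : ZMod (p ^ n)) :
    (IsWhite (digitBlock p k m '' (v +ᵥ (D : Set (ZMod (p ^ n))))) ↔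
      IsWhite (digitBlock p k m '' (D : Set (ZMod (p ^ n))))) ∧
    (IsBlack (digitBlock p k m '' (v +ᵥ (D : Set (ZMod (p ^ n))))) ↔
      IsBlack (digitBlock p k m '' (D : Set (ZMod (p ^ n))))) ∧
    (IsRuled (digitBlock p k m '' (v +ᵥ (D : Set (ZMod (p ^ n))))) ↔
      IsRuled (digitBlock p k m '' (D : Set (ZMod (p ^ n))))) := by
  rw [digitBlock_image_vadd hkm]
  exact ⟨isWhite_vadd_iff _ _, isBlack_vadd_iff _ _, isRuled_vadd_iff _ _⟩

/-- For every subgroup `D` of `(ℤ/2ⁿℤ, +)` (with `n = m·δ`), every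
`v ∈ ℤ/2ⁿℤ` and every brick index `j`, the `j`-th box of the coset `v + D` has the same
kind (white/black/ruled) as the `j`-th box of `D`. -/
theorem stmt_2 (m δ : ℕ) (hm : 1 ≤ m) (hδ : 1 ≤ δ)
    (D : AddSubgroup (ZMod (2 ^ (m * δ)))) (v : ZMod (2 ^ (m * δ))) (j : Fin δ) :
    (IsWhite (projZ m δ j '' ((fun d => v + d) '' (D : Set (ZMod (2 ^ (m * δ)))))) ↔
      IsWhite (projZ m δ j '' (D : Set (ZMod (2 ^ (m * δ)))))) ∧
    (IsBlack (projZ m δ j '' ((fun d => v + d) '' (D : Set (ZMod (2 ^ (m * δ)))))) ↔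
      IsBlack (projZ m δ j '' (D : Set (ZMod (2 ^ (m * δ)))))) ∧
    (IsRuled (projZ m δ j '' ((fun d => v + d) '' (D : Set (ZMod (2 ^ (m * δ)))))) ↔
      IsRuled (projZ m δ j '' (D : Set (ZMod (2 ^ (m * δ)))))) := by
  exact stmt_2_general (Nat.mul_le_mul_left m j.isLt) D v
end

section
/- Let 0 ≤ q ≤ n and let D = ⟨2^q⟩ be the subgroup of (ℤ/2ⁿℤ, +) generated by 2^q; write q = n_w·m + r with 0 ≤ r < m. If r = 0, then π_j(D) = {0} (white) for 1 ≤ j ≤ n_w and π_j(D) = ℤ/2^mℤ (black) for n_w < j ≤ δ. If r > 0, then π_j(D) = {0} (white) for 1 ≤ j ≤ n_w, π_{n_w+1}(D) equals the set of multiples of 2^r in ℤ/2^mℤ, which has cardinality 2^{m−r} strictly between 1 and 2^m (ruled), and π_j(D) = ℤ/2^mℤ (black) for n_w + 2 ≤ j ≤ δ. -/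
/-!
Put `k = q - mj`, truncated at `0`. The `j`-th box of `⟨2^q⟩` is the subgroup `⟨2^k⟩` of `ℤ/2^m`:
if `2^q` divides `x`, then `2^k` divides `⌊x / 2^{mj}⌋`; conversely a block `y` divisible by `2^k`
is the `j`-th block of `2^{mj} y`, which is divisible by `2^{mj + k}`, hence by `2^q`. The box is
black when `k = 0`, white when `m ≤ k`, and ruled, with `2^{m - k}` elements, in between.
-/

open AddSubgroup

namespace ZModBrick

section ZMultiples

variable {n : ℕ}

theorem mem_zmultiples_iff_dvd {a x : ZMod n} : x ∈ zmultiples a ↔ a ∣ x := by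
  simp only [mem_zmultiples_iff, zsmul_eq_mul, mul_comm _ a, dvd_def,
    ZMod.intCast_surjective.exists, eq_comm]

theorem coe_zmultiples_eq_range_mul (a : ZMod n) :
    (zmultiples a : Set (ZMod n)) = Set.range (a * ·) := by
  ext x
  simp only [SetLike.mem_coe, mem_zmultiples_iff_dvd, Set.mem_range, dvd_def, eq_comm]

theorem dvd_val_of_natCast_dvd [NeZero n] {d : ℕ} (hd : d ∣ n) {x : ZMod n}
    (hx : (d : ZMod n) ∣ x) : d ∣ x.val := by
  have hcast : ZMod.castHom hd (ZMod d) d ∣ ZMod.castHom hd (ZMod d) x := map_dvd _ hx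
  rwa [map_natCast, ZMod.natCast_self, zero_dvd_iff, ZMod.castHom_apply, ← ZMod.natCast_val,
    ZMod.natCast_eq_zero_iff] at hcast

end ZMultiples

section Powers

variable {b : ℕ} [NeZero b]

theorem pow_dvd_val_of_natCast_pow_dvd {N q : ℕ} {x : ZMod (b ^ N)}
    (hx : (b : ZMod (b ^ N)) ^ q ∣ x) : b ^ q ∣ x.val := by
  rcases le_total q N with hqN | hNq
  · exact dvd_val_of_natCast_dvd (pow_dvd_pow b hqN) (by rwa [Nat.cast_pow])
  · rw [ZMod.natCast_pow_eq_zero_of_le b hNq, zero_dvd_iff] at hx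
    rw [hx, ZMod.val_zero]
    exact dvd_zero _

theorem ncard_zmultiples_natCast_pow {m r : ℕ} (hr : r ≤ m) :
    (zmultiples ((b : ZMod (b ^ m)) ^ r) : Set (ZMod (b ^ m))).ncard = b ^ (m - r) := by
  rw [← Nat.card_coe_set_eq, SetLike.coe_sort_coe, Nat.card_zmultiples, ← Nat.cast_pow,
    ZMod.addOrderOf_coe _ (NeZero.ne _), Nat.gcd_eq_right (pow_dvd_pow b hr),
    Nat.pow_div hr (NeZero.pos b)]

end Powers

theorem pow_sub_dvd_div_pow {b q k a : ℕ} (ha : b ^ q ∣ a) : b ^ (q - k) ∣ a / b ^ k := by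
  rcases le_total k q with hkq | hqk
  · apply Nat.dvd_div_of_mul_dvd
    rwa [← pow_add, Nat.add_sub_cancel' hkq]
  · rw [Nat.sub_eq_zero_of_le hqk, pow_zero]
    exact one_dvd _

section Boxes

variable {m δ : ℕ} (j : Fin δ)

theorem projZ_natCast_two_pow_mul_val (y : ZMod (2 ^ m)) :
    projZ m δ j ((2 ^ (m * (j : ℕ)) * y.val : ℕ) : ZMod (2 ^ (m * δ))) = y := by
  have hlt : 2 ^ (m * (j : ℕ)) * y.val < 2 ^ (m * δ) := calc
    _ < 2 ^ (m * (j : ℕ)) * 2 ^ m := Nat.mul_lt_mul_of_pos_left (ZMod.val_lt y) (by positivity)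
    _ = 2 ^ (m * ((j : ℕ) + 1)) := by ring
    _ ≤ 2 ^ (m * δ) := Nat.pow_le_pow_right two_pos (Nat.mul_le_mul_left m j.isLt)
  rw [projZ, ZMod.val_natCast_of_lt hlt, Nat.mul_div_cancel_left _ (by positivity),
    ZMod.natCast_zmod_val]

theorem image_projZ_zmultiples_two_pow (q : ℕ) :
    projZ m δ j '' zmultiples ((2 : ZMod (2 ^ (m * δ))) ^ q) =
      zmultiples ((2 : ZMod (2 ^ m)) ^ (q - m * j)) := by
  apply Set.Subset.antisymm
  · rintro _ ⟨x, hx, rfl⟩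
    have hval : 2 ^ q ∣ x.val := pow_dvd_val_of_natCast_pow_dvd (mem_zmultiples_iff_dvd.1 hx)
    have hblock : 2 ^ (q - m * j) ∣ x.val / 2 ^ (m * (j : ℕ)) := pow_sub_dvd_div_pow hval
    refine mem_zmultiples_iff_dvd.2 ?_
    simpa only [projZ, Nat.cast_pow, Nat.cast_ofNat] using
      Nat.cast_dvd_cast (α := ZMod (2 ^ m)) hblock
  · intro y hy
    have hval : 2 ^ (q - m * j) ∣ y.val :=
      pow_dvd_val_of_natCast_pow_dvd (mem_zmultiples_iff_dvd.1 hy)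
    have hlift : 2 ^ q ∣ 2 ^ (m * (j : ℕ)) * y.val := calc
      2 ^ q ∣ 2 ^ (m * (j : ℕ) + (q - m * j)) := pow_dvd_pow 2 le_add_tsub
      _ = 2 ^ (m * (j : ℕ)) * 2 ^ (q - m * j) := pow_add ..
      _ ∣ 2 ^ (m * (j : ℕ)) * y.val := mul_dvd_mul_left _ hval
    refine ⟨_, mem_zmultiples_iff_dvd.2 ?_, projZ_natCast_two_pow_mul_val j y⟩
    simpa only [Nat.cast_pow, Nat.cast_ofNat] using
      Nat.cast_dvd_cast (α := ZMod (2 ^ (m * δ))) hlift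

theorem image_projZ_zmultiples_two_pow_eq_univ {q : ℕ} (hq : q ≤ m * j) :
    projZ m δ j '' zmultiples ((2 : ZMod (2 ^ (m * δ))) ^ q) = Set.univ := by
  rw [image_projZ_zmultiples_two_pow, Nat.sub_eq_zero_of_le hq, pow_zero,
    coe_zmultiples_eq_range_mul]
  simp only [one_mul, Set.range_id']

theorem image_projZ_zmultiples_two_pow_eq_zero {q : ℕ} (hq : m * (j + 1) ≤ q) :
    projZ m δ j '' zmultiples ((2 : ZMod (2 ^ (m * δ))) ^ q) = {0} := by
  have hm : m ≤ q - m * j := Nat.le_sub_of_add_le' (by rwa [← mul_add_one])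
  have hzero : (2 : ZMod (2 ^ m)) ^ (q - m * j) = 0 := ZMod.natCast_pow_eq_zero_of_le 2 hm
  rw [image_projZ_zmultiples_two_pow, hzero, zmultiples_zero_eq_bot, coe_bot]

end Boxes

end ZModBrick

open ZModBrick

/-- Let `D = ⟨2^q⟩ ≤ (ℤ/2ⁿℤ, +)` with `n = m·δ`, `q = n_w·m + r`,
`0 ≤ r < m`.  If `r = 0` then the first `n_w` boxes of `D` are `{0}` (white) and the
remaining ones are everything (black).  If `r > 0` then the first `n_w` boxes are `{0}`
(white), the box number `n_w` (0-indexed) is the set of multiples of `2^r` in `ℤ/2^mℤ`,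
of cardinality `2^{m-r}` strictly between `1` and `2^m` (ruled), and the boxes from
`n_w + 1` on are everything (black). -/
theorem stmt_3 (m δ q : ℕ) (hm : 1 ≤ m) (hδ : 1 ≤ δ) (hq : q ≤ m * δ)
    (nw r : ℕ) (hdecomp : q = nw * m + r) (hr : r < m)
    (D : AddSubgroup (ZMod (2 ^ (m * δ))))
    (hD : D = AddSubgroup.closure {((2 : ZMod (2 ^ (m * δ))) ^ q)}) :
    (r = 0 →
      (∀ j : Fin δ, (j : ℕ) < nw →
        projZ m δ j '' (D : Set (ZMod (2 ^ (m * δ)))) = {0}) ∧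
      (∀ j : Fin δ, nw ≤ (j : ℕ) →
        projZ m δ j '' (D : Set (ZMod (2 ^ (m * δ)))) = Set.univ)) ∧
    (0 < r →
      (∀ j : Fin δ, (j : ℕ) < nw →
        projZ m δ j '' (D : Set (ZMod (2 ^ (m * δ)))) = {0}) ∧
      (∀ j : Fin δ, (j : ℕ) = nw →
        projZ m δ j '' (D : Set (ZMod (2 ^ (m * δ)))) =
          Set.range (fun t : ZMod (2 ^ m) => (2 : ZMod (2 ^ m)) ^ r * t) ∧
        (Set.range (fun t : ZMod (2 ^ m) => (2 : ZMod (2 ^ m)) ^ r * t)).ncard = 2 ^ (m - r) ∧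
        1 < 2 ^ (m - r) ∧ 2 ^ (m - r) < 2 ^ m) ∧
      (∀ j : Fin δ, nw + 1 ≤ (j : ℕ) →
        projZ m δ j '' (D : Set (ZMod (2 ^ (m * δ)))) = Set.univ)) := by
  rw [← zmultiples_eq_closure] at hD
  subst hD
  have white (j : Fin δ) (hj : (j : ℕ) < nw) :
      projZ m δ j '' zmultiples ((2 : ZMod (2 ^ (m * δ))) ^ q) = {0} :=
    image_projZ_zmultiples_two_pow_eq_zero j (by nlinarith)
  have black (j : Fin δ) (hj : q ≤ m * j) :
      projZ m δ j '' zmultiples ((2 : ZMod (2 ^ (m * δ))) ^ q) = Set.univ :=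
    image_projZ_zmultiples_two_pow_eq_univ j hj
  refine ⟨fun hr0 => ⟨white, fun j hj => black j (by nlinarith)⟩,
    fun hrpos => ⟨white, fun j hj => ?_, fun j hj => black j (by nlinarith)⟩⟩
  have hqj : q - m * j = r := by rw [hdecomp, hj, mul_comm, Nat.add_sub_cancel_left]
  rw [← coe_zmultiples_eq_range_mul]
  exact ⟨by rw [image_projZ_zmultiples_two_pow, hqj],
    ncard_zmultiples_natCast_pow hr.le,
    Nat.one_lt_two_pow (Nat.sub_ne_zero_of_lt hr),
    Nat.pow_lt_pow_right one_lt_two (Nat.sub_lt hm hrpos)⟩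
end

section
/- Let Λ ∈ GL_n(𝔽₂), let 1 ≤ n_w ≤ δ−1, and let D = {v_w} × 𝔽₂^{m(δ−n_w)} ⊆ V be in standard form of type (n_w, 0, δ−n_w) for some v_w ∈ 𝔽₂^{m·n_w}. If the type of DΛ is also (n_w, 0, δ−n_w) (its first n_w boxes white and its remaining δ−n_w boxes black), then the block submatrix Λ_{(n_w+1,1):(δ,n_w)} is the zero matrix. -/
/-!
A white `j`-th box of `DΛ` says that the `j`-th brick of `vΛ` is the same for all `v ∈ D`, and it
also makes `D` nonempty. If `r` is a coordinate of a free brick of `D`, then with `v` also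
`v + e_r` lies in `D`, so comparing the two images shows that the `j`-th brick of `e_r Λ`, the
`r`-th row of `Λ`, is zero.
-/

open Matrix

/-- The index in `Fin (m * δ)` of the `i`-th coordinate of the `j`-th brick. -/
def brickIdx (m δ : ℕ) (j : Fin δ) (i : Fin m) : Fin (m * δ) :=
  ⟨m * j.val + i.val, by
    have h1 : m * j.val + i.val < m * (j.val + 1) := by
      rw [Nat.mul_succ]
      exact Nat.add_lt_add_left i.isLt _
    exact lt_of_lt_of_le h1 (Nat.mul_le_mul le_rfl j.isLt)⟩

/-- The projection of a vector on its `j`-th brick. -/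
def brickProj (m δ : ℕ) (v : Fin (m * δ) → ZMod 2) (j : Fin δ) : Fin m → ZMod 2 :=
  fun i => v (brickIdx m δ j i)

/-- The `j`-th box of a subset `D`: the projection of `D` on the `j`-th brick. -/
def box (m δ : ℕ) (D : Set (Fin (m * δ) → ZMod 2)) (j : Fin δ) : Set (Fin m → ZMod 2) :=
  (fun v => brickProj m δ v j) '' D

/-- The set `{v_w} × R × 𝔽₂^{m·n_b}` in standard form: the first `nw` bricks are fixed
(equal to `w`), the brick number `nw` (0-indexed) lies in `R` when `nr = 1`, and the
remaining bricks are free. -/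
def StdSet (m δ nw nr : ℕ) (w : Fin δ → Fin m → ZMod 2) (R : Set (Fin m → ZMod 2)) :
    Set (Fin (m * δ) → ZMod 2) :=
  { v | (∀ j : Fin δ, (j : ℕ) < nw → brickProj m δ v j = w j) ∧
        (nr = 1 → ∀ j : Fin δ, (j : ℕ) = nw → brickProj m δ v j ∈ R) }

/-- `D` is in standard form of type `(nw, nr, nb)`. -/
def StdForm (m δ : ℕ) (D : Set (Fin (m * δ) → ZMod 2)) (nw nr nb : ℕ) : Prop :=
  nw + nr + nb = δ ∧ nr ≤ 1 ∧
  ∃ (w : Fin δ → Fin m → ZMod 2) (R : Set (Fin m → ZMod 2)),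
    (nr = 1 → 2 ≤ R.ncard ∧ R.ncard ≤ 2 ^ m - 1) ∧ D = StdSet m δ nw nr w R

/-- `D` has type `(nw, nr, nb)`: its first `nw` boxes are white, the next `nr` boxes are
ruled, and its last `nb` boxes are black. -/
def HasType (m δ : ℕ) (D : Set (Fin (m * δ) → ZMod 2)) (nw nr nb : ℕ) : Prop :=
  nw + nr + nb = δ ∧ nr ≤ 1 ∧
  ∀ j : Fin δ,
    ((j : ℕ) < nw → IsWhite (box m δ D j)) ∧
    (nw ≤ (j : ℕ) → (j : ℕ) < nw + nr → IsRuled (box m δ D j)) ∧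
    (nw + nr ≤ (j : ℕ) → IsBlack (box m δ D j))

/-- `D` and `E` have the same type: corresponding boxes have the same kind. -/
def SameType (m δ : ℕ) (D E : Set (Fin (m * δ) → ZMod 2)) : Prop :=
  ∀ j : Fin δ,
    (IsWhite (box m δ D j) ↔ IsWhite (box m δ E j)) ∧
    (IsBlack (box m δ D j) ↔ IsBlack (box m δ E j))

lemma m_le_mul (m d : ℕ) (h : 1 ≤ d) : m ≤ m * d := by
  calc m = m * 1 := (Nat.mul_one m).symm
  _ ≤ m * d := Nat.mul_le_mul le_rfl h

lemma shift_lt (m δ a : ℕ) (ha : a ≤ δ) (k : ℕ) (hk : k < m * (δ - a)) :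
    m * a + k < m * δ := by
  have h := Nat.add_lt_add_left hk (m * a)
  rwa [← Nat.mul_add, Nat.add_sub_cancel' ha] at h

/-- The index in `Fin (m * δ)` obtained by skipping the first `a` bricks. -/
def shiftIdx (m δ a : ℕ) (ha : a ≤ δ) (k : Fin (m * (δ - a))) : Fin (m * δ) :=
  ⟨m * a + k.val, shift_lt m δ a ha k.val k.isLt⟩

/-- The submatrix `Λ_{(a+1,b+1):(δ,δ)}` (blocks with row brick ≥ a and column brick ≥ b). -/
def subBlock (m δ : ℕ) (Λ : Matrix (Fin (m * δ)) (Fin (m * δ)) (ZMod 2))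
    (a b : ℕ) (ha : a ≤ δ) (hb : b ≤ δ) :
    Matrix (Fin (m * (δ - a))) (Fin (m * (δ - b))) (ZMod 2) :=
  Matrix.of fun r c => Λ (shiftIdx m δ a ha r) (shiftIdx m δ b hb c)

/-- The column of blocks `Λ_{(a+1,j+1):(δ,j+1)}` (row bricks ≥ a, column brick j). -/
def subColBlock (m δ : ℕ) (Λ : Matrix (Fin (m * δ)) (Fin (m * δ)) (ZMod 2))
    (a : ℕ) (ha : a ≤ δ) (j : Fin δ) :
    Matrix (Fin (m * (δ - a))) (Fin m) (ZMod 2) :=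
  Matrix.of fun r c => Λ (shiftIdx m δ a ha r) (brickIdx m δ j c)

/-- The row of blocks `Λ_{(j+1,1):(j+1,c2)}` (row brick j, column bricks < c2). -/
def rowBlock (m δ : ℕ) (Λ : Matrix (Fin (m * δ)) (Fin (m * δ)) (ZMod 2))
    (j : Fin δ) (c2 : ℕ) (hc : c2 ≤ δ) :
    Matrix (Fin m) (Fin (m * c2)) (ZMod 2) :=
  Matrix.of fun i c => Λ (brickIdx m δ j i) (Fin.castLE (Nat.mul_le_mul le_rfl hc) c)

/-- The block `Λ_{j+1, j'+1}`. -/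
def block (m δ : ℕ) (Λ : Matrix (Fin (m * δ)) (Fin (m * δ)) (ZMod 2)) (j j' : Fin δ) :
    Matrix (Fin m) (Fin m) (ZMod 2) :=
  Matrix.of fun i i' => Λ (brickIdx m δ j i) (brickIdx m δ j' i')

/-- The set `R × 𝔽₂^{m (d-1)}` of vectors of `d` bricks whose first brick lies in `R`. -/
def rulDomain (m d : ℕ) (hd : 1 ≤ d) (R : Set (Fin m → ZMod 2)) :
    Set (Fin (m * d) → ZMod 2) :=
  { u | (fun i : Fin m => u (Fin.castLE (m_le_mul m d hd) i)) ∈ R }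

theorem add_single_one_vecMul_apply_eq_iff {ι κ α : Type*} [Fintype ι] [DecidableEq ι]
    [NonAssocSemiring α] [IsLeftCancelAdd α] (M : Matrix ι κ α) (v : ι → α) (r : ι) (c : κ) :
    ((v + Pi.single r 1) ᵥ* M) c = (v ᵥ* M) c ↔ M r c = 0 := by
  rw [add_vecMul, single_one_vecMul, Pi.add_apply, add_eq_left, row_apply]

section Bricks

variable {m δ nw nr : ℕ}

theorem brickIdx_lt_mul_iff (j : Fin δ) (i : Fin m) (a : ℕ) :
    (brickIdx m δ j i : ℕ) < m * a ↔ (j : ℕ) < a := by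
  have hm : 0 < m := i.pos
  have hdiv : (brickIdx m δ j i : ℕ) / m = j := by
    rw [brickIdx, Nat.mul_add_div hm, Nat.div_eq_of_lt i.isLt, Nat.add_zero]
  rw [mul_comm m a, ← Nat.div_lt_iff_lt_mul hm, hdiv]

theorem exists_brickIdx_eq (c : Fin (m * δ)) : ∃ j i, brickIdx m δ j i = c :=
  let c' : Fin (δ * m) := c.cast (mul_comm m δ)
  ⟨c'.divNat, c'.modNat, Fin.ext (Nat.div_add_mod (c : ℕ) m)⟩

theorem brickProj_add_single_of_le {a : ℕ} (v : Fin (m * δ) → ZMod 2) {r : Fin (m * δ)}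
    (x : ZMod 2) (hr : m * a ≤ (r : ℕ)) {j : Fin δ} (hj : (j : ℕ) < a) :
    brickProj m δ (v + Pi.single r x) j = brickProj m δ v j := by
  funext i
  have hne : brickIdx m δ j i ≠ r :=
    Fin.ne_of_lt (((brickIdx_lt_mul_iff j i a).2 hj).trans_le hr)
  rw [brickProj, Pi.add_apply, Pi.single_eq_of_ne hne, add_zero, brickProj]

theorem mem_stdSet_congr (w : Fin δ → Fin m → ZMod 2) (R : Set (Fin m → ZMod 2))
    {u v : Fin (m * δ) → ZMod 2}
    (h : ∀ j : Fin δ, (j : ℕ) < nw + nr → brickProj m δ u j = brickProj m δ v j) :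
    u ∈ StdSet m δ nw nr w R ↔ v ∈ StdSet m δ nw nr w R := by
  refine and_congr (forall₂_congr fun j hj => ?_) (forall₃_congr fun hnr j hj => ?_)
  · rw [h j (by omega)]
  · rw [h j (by omega)]

theorem brickProj_eq_of_isWhite_box {D : Set (Fin (m * δ) → ZMod 2)} {j : Fin δ}
    (h : IsWhite (box m δ D j)) {u v : Fin (m * δ) → ZMod 2} (hu : u ∈ D) (hv : v ∈ D) :
    brickProj m δ u j = brickProj m δ v j :=
  (Set.exists_eq_singleton_iff_nonempty_subsingleton.1 h).2
    (Set.mem_image_of_mem _ hu) (Set.mem_image_of_mem _ hv)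

theorem IsWhite.nonempty_of_box {D : Set (Fin (m * δ) → ZMod 2)} {j : Fin δ}
    (h : IsWhite (box m δ D j)) : D.Nonempty :=
  (Set.exists_eq_singleton_iff_nonempty_subsingleton.1 h).1.of_image

theorem apply_brickIdx_eq_zero_of_isWhite_box (Λ : Matrix (Fin (m * δ)) (Fin (m * δ)) (ZMod 2))
    (w : Fin δ → Fin m → ZMod 2) (R : Set (Fin m → ZMod 2)) {j : Fin δ}
    (hwhite : IsWhite (box m δ ((fun v => v ᵥ* Λ) '' StdSet m δ nw nr w R) j))
    {r : Fin (m * δ)} (hr : m * (nw + nr) ≤ (r : ℕ)) (i : Fin m) :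
    Λ r (brickIdx m δ j i) = 0 := by
  obtain ⟨v, hv⟩ := hwhite.nonempty_of_box.of_image
  have hv' : v + Pi.single r 1 ∈ StdSet m δ nw nr w R :=
    (mem_stdSet_congr w R fun _ hk => brickProj_add_single_of_le v 1 hr hk).2 hv
  have hbrick : brickProj m δ ((v + Pi.single r 1) ᵥ* Λ) j = brickProj m δ (v ᵥ* Λ) j :=
    brickProj_eq_of_isWhite_box hwhite (Set.mem_image_of_mem _ hv') (Set.mem_image_of_mem _ hv)
  exact (add_single_one_vecMul_apply_eq_iff Λ v r _).1 (congrFun hbrick i)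

theorem stmt_4_general (Λ : Matrix (Fin (m * δ)) (Fin (m * δ)) (ZMod 2))
    (w : Fin δ → Fin m → ZMod 2) (R : Set (Fin m → ZMod 2)) (b : ℕ)
    (hwhite : ∀ j : Fin δ, (j : ℕ) < b →
      IsWhite (box m δ ((fun v => v ᵥ* Λ) '' StdSet m δ nw nr w R) j)) :
    ∀ r c : Fin (m * δ), m * (nw + nr) ≤ (r : ℕ) → (c : ℕ) < m * b → Λ r c = 0 := by
  intro r c hr hc
  obtain ⟨j, i, rfl⟩ := exists_brickIdx_eq c
  exact apply_brickIdx_eq_zero_of_isWhite_box Λ w R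
    (hwhite j ((brickIdx_lt_mul_iff j i b).1 hc)) hr i

end Bricks

/-- **Lemma: necessity, non-ruled case.** If `D = {v_w} × 𝔽₂^{m(δ-n_w)}` is in
standard form of type `(n_w, 0, δ-n_w)` and `DΛ` also has type `(n_w, 0, δ-n_w)`, then the
block submatrix `Λ_{(n_w+1,1):(δ,n_w)}` is zero. -/
theorem stmt_4 (m δ : ℕ) (hm : 2 ≤ m) (hδ : 2 ≤ δ)
    (Λ : Matrix (Fin (m * δ)) (Fin (m * δ)) (ZMod 2)) (hΛ : IsUnit Λ)
    (nw : ℕ) (hnw1 : 1 ≤ nw) (hnw2 : nw ≤ δ - 1)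
    (w : Fin δ → Fin m → ZMod 2)
    (hType : HasType m δ ((fun v => Matrix.vecMul v Λ) '' StdSet m δ nw 0 w ∅)
      nw 0 (δ - nw)) :
    ∀ r c : Fin (m * δ), m * nw ≤ (r : ℕ) → (c : ℕ) < m * nw → Λ r c = 0 :=
  stmt_4_general Λ w ∅ nw fun j => (hType.2.2 j).1
end

section
/- Let Λ ∈ GL_n(𝔽₂). (Necessity) If some set D = {v_w} × R in standard form of type (δ−1, 1, 0) is such that DΛ also has type (δ−1, 1, 0) (first δ−1 boxes white, last box ruled), then the m × m(δ−1) matrix Λ_{(δ,1):(δ,δ−1)} has rank strictly less than m and the block Λ_{δ,δ} is nonzero. (Sufficiency) Conversely, if Λ_{(δ,1):(δ,δ−1)} has rank strictly less than m and Λ_{δ,δ} ≠ 0, then there exists a set D in standard form of type (δ−1, 1, 0) such that DΛ also has type (δ−1, 1, 0). -/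
/-!
If the last brick of the points of `{v_w} × R` is called `r`, the `j`-th brick of their images
under `Λ` is `r Λ_{δ,j}` up to a translation that depends only on `v_w`. Hence the first `δ - 1`
boxes of the image are white exactly when differences of points of `R` lie in the left kernel of
`Λ_{(δ,1):(δ,δ-1)}`. For `R` with two or more points this forces the `m` rows of that matrix to be
dependent; conversely a nonzero `x` in the left kernel gives `R = {0, x}`. Since `Λ` is invertible,
such an `x` satisfies `x Λ_{δ,δ} ≠ 0`: so `Λ_{δ,δ} ≠ 0`, and the last box of the image of
`{v_w} × {0, x}` has exactly two of the `2 ^ m > 2` points.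
-/

open Matrix

section General

variable {K ι κ α : Type*}

lemma rank_lt_card_iff_exists_vecMul_eq_zero [Field K] [Fintype ι] [Fintype κ]
    (A : Matrix ι κ K) : A.rank < Fintype.card ι ↔ ∃ x ≠ 0, x ᵥ* A = 0 := by
  have h_indep : A.rank < Fintype.card ι ↔ ¬ LinearIndependent K A.row := by
    rw [linearIndependent_iff_card_le_finrank_span, rank_eq_finrank_span_row, ← not_le, Set.finrank]
  have h_ker : Function.Injective A.vecMul ↔ ∀ x, x ᵥ* A = 0 → x = 0 :=
    injective_iff_map_eq_zero A.vecMulLinear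
  rw [h_indep, ← vecMul_injective_iff, h_ker]
  push Not
  simp only [and_comm]

lemma isWhite_iff_nonempty_subsingleton {S : Set α} : IsWhite S ↔ S.Nonempty ∧ S.Subsingleton :=
  Set.exists_eq_singleton_iff_nonempty_subsingleton

lemma isRuled_pair {a b : α} (hab : a ≠ b) (hα : 2 < ENat.card α) :
    IsRuled ({a, b} : Set α) := by
  refine ⟨fun h => hab ?_, fun h => ?_⟩
  · have hsub := (isWhite_iff_nonempty_subsingleton.1 h).2
    exact hsub (Set.mem_insert a _) (Set.mem_insert_of_mem a rfl)
  · rw [← Set.encard_univ, ← show {a, b} = Set.univ from h, Set.encard_pair hab] at hα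
    exact lt_irrefl _ hα

end General

section Bricks

variable {m δ : ℕ}

/-- Pairs (brick, position in the brick) as coordinates: `brickIdx` as a bijection. -/
def brickIdxEquiv (m δ : ℕ) : Fin δ × Fin m ≃ Fin (m * δ) :=
  finProdFinEquiv.trans (finCongr (Nat.mul_comm δ m))

lemma brickIdxEquiv_apply (j : Fin δ) (i : Fin m) : brickIdxEquiv m δ (j, i) = brickIdx m δ j i :=
  Fin.ext (Nat.add_comm _ _)

/-- The identification of `𝔽₂^{m·δ}` with `V₁ × ⋯ × V_δ`, a vector being sent to its bricks. -/
def bricks (m δ : ℕ) : (Fin (m * δ) → ZMod 2) ≃ₗ[ZMod 2] (Fin δ → Fin m → ZMod 2) :=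
  (LinearEquiv.funCongrLeft (ZMod 2) (ZMod 2) (brickIdxEquiv m δ)).trans
    (LinearEquiv.curry (ZMod 2) (ZMod 2) (Fin δ) (Fin m))

lemma bricks_apply (v : Fin (m * δ) → ZMod 2) (j : Fin δ) :
    bricks m δ v j = brickProj m δ v j :=
  funext fun i => congrArg v (brickIdxEquiv_apply j i)

lemma brickProj_bricks_symm (f : Fin δ → Fin m → ZMod 2) (j : Fin δ) :
    brickProj m δ ((bricks m δ).symm f) j = f j := by
  rw [← bricks_apply, LinearEquiv.apply_symm_apply]

variable (Λ : Matrix (Fin (m * δ)) (Fin (m * δ)) (ZMod 2)) (l : Fin δ)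

lemma brickProj_vecMul (v : Fin (m * δ) → ZMod 2) (j : Fin δ) :
    brickProj m δ (v ᵥ* Λ) j = ∑ i, brickProj m δ v i ᵥ* block m δ Λ i j := by
  ext k
  simp only [brickProj, vecMul, dotProduct, block, of_apply, Finset.sum_apply,
    ← brickIdxEquiv_apply, ← (brickIdxEquiv m δ).sum_comp, Fintype.sum_prod_type]

lemma vecMul_rowBlock_eq_zero_iff (c : ℕ) (hc : c ≤ δ) (x : Fin m → ZMod 2) :
    x ᵥ* rowBlock m δ Λ l c hc = 0 ↔ ∀ j : Fin δ, (j : ℕ) < c → x ᵥ* block m δ Λ l j = 0 := by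
  constructor
  · intro h j hj
    ext i
    exact congrFun h (brickIdx m c ⟨j, hj⟩ i)
  · intro h
    ext k
    obtain ⟨⟨j, i⟩, rfl⟩ := (brickIdxEquiv m c).surjective k
    rw [brickIdxEquiv_apply]
    exact congrFun (h (Fin.castLE hc j) j.isLt) i

lemma rank_rowBlock_lt_iff (c : ℕ) (hc : c ≤ δ) :
    (rowBlock m δ Λ l c hc).rank < m ↔
      ∃ x ≠ 0, ∀ j : Fin δ, (j : ℕ) < c → x ᵥ* block m δ Λ l j = 0 := by
  simpa only [Fintype.card_fin, vecMul_rowBlock_eq_zero_iff] using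
    rank_lt_card_iff_exists_vecMul_eq_zero (rowBlock m δ Λ l c hc)

variable {Λ l}

lemma exists_vecMul_block_ne_zero (hΛ : IsUnit Λ) {x : Fin m → ZMod 2} (hx : x ≠ 0) :
    ∃ j, x ᵥ* block m δ Λ l j ≠ 0 := by
  by_contra! h
  set v := (bricks m δ).symm (Pi.single l x) with hv
  have hvΛ : v ᵥ* Λ = 0 ᵥ* Λ := by
    apply (bricks m δ).injective
    ext1 j
    rw [bricks_apply, brickProj_vecMul, zero_vecMul, map_zero, Fintype.sum_eq_single l]
    · rw [hv, brickProj_bricks_symm, Pi.single_eq_same, h, Pi.zero_apply]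
    · intro i hi
      rw [hv, brickProj_bricks_symm, Pi.single_eq_of_ne hi, zero_vecMul]
  have hv_zero : v = 0 := vecMul_injective_of_isUnit hΛ hvΛ
  rw [hv, LinearEquiv.map_eq_zero_iff, Pi.single_eq_zero_iff] at hv_zero
  exact hx hv_zero

lemma vecMul_block_self_ne_zero (hΛ : IsUnit Λ) (hl : IsTop l) {x : Fin m → ZMod 2} (hx : x ≠ 0)
    (h : ∀ j < l, x ᵥ* block m δ Λ l j = 0) : x ᵥ* block m δ Λ l l ≠ 0 := by
  obtain ⟨j, hj⟩ := exists_vecMul_block_ne_zero hΛ hx (l := l)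
  obtain rfl | hjl := (hl j).eq_or_lt
  · exact hj
  · exact absurd (h j hjl) hj

lemma block_self_ne_zero_of_rank_rowBlock_lt (hΛ : IsUnit Λ) (hl : IsTop l)
    (hrank : (rowBlock m δ Λ l l l.isLt.le).rank < m) : block m δ Λ l l ≠ 0 := by
  obtain ⟨x, hx, hker⟩ := (rank_rowBlock_lt_iff Λ l l _).1 hrank
  intro h
  exact vecMul_block_self_ne_zero hΛ hl hx hker (by rw [h, vecMul_zero])

lemma isTop_of_val_add_one_eq (hl : (l : ℕ) + 1 = δ) : IsTop l :=
  fun j => Fin.le_def.2 (by omega)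

lemma stdSet_eq_image_update (hl : IsTop l) (w : Fin δ → Fin m → ZMod 2)
    (R : Set (Fin m → ZMod 2)) :
    StdSet m δ l 1 w R = (fun r => (bricks m δ).symm (Function.update w l r)) '' R := by
  ext v
  constructor
  · rintro ⟨hw, hR⟩
    refine ⟨brickProj m δ v l, hR rfl l rfl, (LinearEquiv.symm_apply_eq _).2 ?_⟩
    refine Function.update_eq_iff.2 ⟨(bricks_apply v l).symm, fun j hj => ?_⟩
    rw [bricks_apply, hw j ((hl j).lt_of_ne hj)]
  · rintro ⟨r, hr, rfl⟩
    refine ⟨fun j hj => ?_, fun _ j hj => ?_⟩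
    · rw [brickProj_bricks_symm, Function.update_of_ne (Fin.ne_of_lt hj)]
    · obtain rfl : j = l := Fin.ext hj
      rwa [brickProj_bricks_symm, Function.update_self]

lemma box_image_vecMul_stdSet (hl : IsTop l) (w : Fin δ → Fin m → ZMod 2)
    (R : Set (Fin m → ZMod 2)) (j : Fin δ) :
    box m δ ((fun v => v ᵥ* Λ) '' StdSet m δ l 1 w R) j =
      (fun r => r ᵥ* block m δ Λ l j + ∑ i ∈ {l}ᶜ, w i ᵥ* block m δ Λ i j) '' R := by
  rw [box, stdSet_eq_image_update hl, Set.image_image, Set.image_image]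
  refine Set.image_congr fun r _ => ?_
  simp only [brickProj_vecMul, brickProj_bricks_symm]
  rw [Fintype.sum_eq_add_sum_compl l, Function.update_self]
  congr 1
  refine Finset.sum_congr rfl fun i hi => ?_
  rw [Function.update_of_ne (by simpa using hi)]

lemma rank_rowBlock_lt_of_isWhite {D : Set (Fin (m * δ) → ZMod 2)} (hD : StdForm m δ D l 1 0)
    (hwhite : ∀ j < l, IsWhite (box m δ ((fun v => v ᵥ* Λ) '' D) j)) :
    (rowBlock m δ Λ l l l.isLt.le).rank < m := by
  obtain ⟨hl, -, w, R, hR, rfl⟩ := hD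
  obtain ⟨a, ha, b, hb, hab⟩ := (Set.one_lt_ncard_iff_nontrivial_and_finite.1 (hR rfl).1).1
  refine (rank_rowBlock_lt_iff Λ l l _).2 ⟨a - b, sub_ne_zero.2 hab, fun j hj => ?_⟩
  have hsub := (isWhite_iff_nonempty_subsingleton.1 (hwhite j hj)).2
  rw [box_image_vecMul_stdSet (isTop_of_val_add_one_eq hl)] at hsub
  rw [sub_vecMul, sub_eq_zero]
  exact add_right_cancel (hsub (Set.mem_image_of_mem _ ha) (Set.mem_image_of_mem _ hb))

lemma exists_stdForm_hasType_of_rank_rowBlock_lt (hm : 2 ≤ m) (hΛ : IsUnit Λ)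
    (hl : (l : ℕ) + 1 = δ) (hrank : (rowBlock m δ Λ l l l.isLt.le).rank < m) :
    ∃ D, StdForm m δ D l 1 0 ∧ HasType m δ ((fun v => v ᵥ* Λ) '' D) l 1 0 := by
  obtain ⟨x, hx, hker⟩ := (rank_rowBlock_lt_iff Λ l l _).1 hrank
  have htop := isTop_of_val_add_one_eq hl
  have hpow : 2 ^ 2 ≤ 2 ^ m := Nat.pow_le_pow_right two_pos hm
  have hbox (j : Fin δ) : box m δ ((fun v => v ᵥ* Λ) '' StdSet m δ l 1 0 {0, x}) j =
      {0, x ᵥ* block m δ Λ l j} := by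
    simp [box_image_vecMul_stdSet htop, Set.image_pair]
  refine ⟨StdSet m δ l 1 0 {0, x}, ⟨hl, le_rfl, 0, {0, x}, fun _ => ?_, rfl⟩, hl, le_rfl,
    fun j => ⟨fun hj => ?_, fun hj _ => ?_, fun hj => absurd j.isLt (by omega)⟩⟩
  · rw [Set.ncard_pair hx.symm]
    omega
  · exact ⟨0, by rw [hbox, hker j hj, Set.pair_eq_singleton]⟩
  · obtain rfl : j = l := le_antisymm (htop j) hj
    have hcard : 2 < ENat.card (Fin m → ZMod 2) := by
      rw [ENat.card_eq_coe_fintype_card, Fintype.card_fun, ZMod.card, Fintype.card_fin]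
      exact_mod_cast (by omega : 2 < 2 ^ m)
    rw [hbox]
    exact isRuled_pair (vecMul_block_self_ne_zero hΛ htop hx hker).symm hcard

end Bricks

/-- **Lemma: type `(δ-1,1,0)`.**
Necessity: if some `D = {v_w} × R` in standard form of type `(δ-1, 1, 0)` is such that
`DΛ` also has type `(δ-1, 1, 0)`, then `Λ_{(δ,1):(δ,δ-1)}` has rank `< m` and the block
`Λ_{δ,δ}` is nonzero.  Sufficiency: conversely, if `Λ_{(δ,1):(δ,δ-1)}` has rank `< m` and
`Λ_{δ,δ} ≠ 0`, then there exists `D` in standard form of type `(δ-1, 1, 0)` with `DΛ` of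
type `(δ-1, 1, 0)`. -/
theorem stmt_9 (m δ : ℕ) (hm : 2 ≤ m) (hδ : 2 ≤ δ)
    (Λ : Matrix (Fin (m * δ)) (Fin (m * δ)) (ZMod 2)) (hΛ : IsUnit Λ) :
    ((∃ D : Set (Fin (m * δ) → ZMod 2),
        StdForm m δ D (δ - 1) 1 0 ∧
        HasType m δ ((fun v => Matrix.vecMul v Λ) '' D) (δ - 1) 1 0) →
      ((rowBlock m δ Λ ⟨δ - 1, by omega⟩ (δ - 1) (by omega)).rank < m ∧
        block m δ Λ ⟨δ - 1, by omega⟩ ⟨δ - 1, by omega⟩ ≠ 0)) ∧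
    (((rowBlock m δ Λ ⟨δ - 1, by omega⟩ (δ - 1) (by omega)).rank < m ∧
        block m δ Λ ⟨δ - 1, by omega⟩ ⟨δ - 1, by omega⟩ ≠ 0) →
      ∃ D : Set (Fin (m * δ) → ZMod 2),
        StdForm m δ D (δ - 1) 1 0 ∧
        HasType m δ ((fun v => Matrix.vecMul v Λ) '' D) (δ - 1) 1 0) := by
  have hl : ((⟨δ - 1, by omega⟩ : Fin δ) : ℕ) + 1 = δ := Nat.sub_add_cancel (by omega)
  constructor
  · rintro ⟨D, hD, -, -, hboxes⟩
    have hrank := rank_rowBlock_lt_of_isWhite (l := ⟨δ - 1, by omega⟩) hD fun j => (hboxes j).1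
    exact ⟨hrank, block_self_ne_zero_of_rank_rowBlock_lt hΛ (isTop_of_val_add_one_eq hl) hrank⟩
  · rintro ⟨hrank, -⟩
    exact exists_stdForm_hasType_of_rank_rowBlock_lt hm hΛ hl hrank
end

section
/- Let m = 4, δ = 16, n = 64, and let P ∈ GL₆₄(𝔽₂) be the permutation matrix of the PRESENT bit permutation, i.e. P_{i,j} = 1 if and only if j = π(i), where π(i) = (16(i−1) mod 63) + 1 for 1 ≤ i ≤ 63 and π(64) = 64. Then P is non-type-preserving: there exists a subset D ⊆ 𝔽₂⁶⁴ in standard form of non-trivial type such that the type of DP differs from the type of D. -/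
/-! The vectors of a set `D` in standard form agree on the white bricks. So if the rows of `Λ` at
the remaining bricks, restricted to the columns of brick `j`, are all orthogonal to some `c ≠ 0`,
then `u ↦ u ⬝ᵥ c` is constant on the `j`-th box of `DΛ`, which therefore is not black. For PRESENT,
the coordinates `60, 61, 62, 63` of the last brick are sent to `15, 31, 47, 63`, which misses `60`:
the first column of the last diagonal block vanishes, and type `(15, 0, 1)` is not preserved. -/

open Matrix

/-- The permutation matrix of the PRESENT bit permutation (0-indexed):
`π(i) = 16·i mod 63` for `i < 63` and `π(63) = 63`; entry `(i, j)` is `1` iff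
`j = π(i)`. -/
def presentMatrix : Matrix (Fin (4 * 16)) (Fin (4 * 16)) (ZMod 2) :=
  Matrix.of fun i j =>
    if (j : ℕ) = (if (i : ℕ) = 63 then 63 else (16 * (i : ℕ)) % 63) then 1 else 0

section Bricks

variable {m δ : ℕ}

/-- The bijection between pairs (brick, position in the brick) and coordinates given by
`brickIdx`, which makes it possible to build vectors brick by brick. -/
def brickEquiv (m δ : ℕ) : Fin δ × Fin m ≃ Fin (m * δ) :=
  finProdFinEquiv.trans (finCongr (Nat.mul_comm δ m))

theorem brickEquiv_apply (j : Fin δ) (i : Fin m) : brickEquiv m δ (j, i) = brickIdx m δ j i :=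
  Fin.ext (Nat.add_comm _ _)

theorem exists_brickProj_eq (x : Fin δ → Fin m → ZMod 2) : ∃ v, brickProj m δ v = x := by
  refine ⟨Function.uncurry x ∘ (brickEquiv m δ).symm, ?_⟩
  ext j i
  simp [brickProj, ← brickEquiv_apply]

theorem exists_shiftIdx_eq {a : ℕ} (ha : a ≤ δ) {k : Fin (m * δ)} (hk : m * a ≤ k) :
    ∃ r, shiftIdx m δ a ha r = k :=
  ⟨⟨k - m * a, by rw [Nat.mul_sub]; omega⟩, Fin.ext (Nat.add_sub_cancel' hk)⟩

end Bricks

section StandardForm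

variable {m δ nw nr nb : ℕ} {w : Fin δ → Fin m → ZMod 2} {R : Set (Fin m → ZMod 2)}
  {D : Set (Fin (m * δ) → ZMod 2)} {v v' : Fin (m * δ) → ZMod 2} {j : Fin δ}

theorem StdForm.nonempty (hD : StdForm m δ D nw nr nb) : D.Nonempty := by
  obtain ⟨-, -, w, R, hR, rfl⟩ := hD
  obtain ⟨r, hr⟩ : ∃ r, nr = 1 → r ∈ R := by
    by_cases hnr : nr = 1
    · obtain ⟨r, hr⟩ := Set.nonempty_of_ncard_ne_zero (by have := (hR hnr).1; omega : R.ncard ≠ 0)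
      exact ⟨r, fun _ => hr⟩
    · exact ⟨0, fun h => absurd h hnr⟩
  obtain ⟨v, hv⟩ := exists_brickProj_eq fun j : Fin δ => if (j : ℕ) < nw then w j else r
  refine ⟨v, fun j hj => ?_, fun hnr j hj => ?_⟩
  · simp [hv, hj]
  · simpa [hv, hj] using hr hnr

theorem isBlack_box_stdSet (hD : (StdSet m δ nw nr w R).Nonempty) (hj : nw + nr ≤ j) :
    IsBlack (box m δ (StdSet m δ nw nr w R) j) := by
  obtain ⟨v, hw, hR⟩ := hD
  refine Set.eq_univ_of_forall fun u => ?_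
  obtain ⟨v', hv'⟩ := exists_brickProj_eq (Function.update (brickProj m δ v) j u)
  refine ⟨v', ⟨fun i hi => ?_, fun hnr i hi => ?_⟩, by simp [hv']⟩
  · have hij : i ≠ j := by rintro rfl; omega
    simpa [hv', hij] using hw i hi
  · have hij : i ≠ j := by rintro rfl; omega
    simpa [hv', hij] using hR hnr i hi

theorem apply_eq_apply_of_mem_stdSet (hv : v ∈ StdSet m δ nw nr w R)
    (hv' : v' ∈ StdSet m δ nw nr w R) {k : Fin (m * δ)} (hk : (k : ℕ) < m * nw) : v k = v' k := by
  obtain ⟨⟨j, i⟩, rfl⟩ := (brickEquiv m δ).surjective k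
  rw [brickEquiv_apply] at hk ⊢
  have hj : (j : ℕ) < nw :=
    Nat.lt_of_mul_lt_mul_left (lt_of_le_of_lt (Nat.le_add_right (m * j) i) hk)
  exact congrFun ((hv.1 j hj).trans (hv'.1 j hj).symm) i

end StandardForm

section ColumnRelation

variable {m δ nw nr nb : ℕ} {w : Fin δ → Fin m → ZMod 2} {R : Set (Fin m → ZMod 2)}
  {D : Set (Fin (m * δ) → ZMod 2)} {Λ : Matrix (Fin (m * δ)) (Fin (m * δ)) (ZMod 2)}
  {j : Fin δ} {c : Fin m → ZMod 2}

theorem not_isBlack_of_dotProduct_const {ι K : Type*} [Fintype ι] [NonAssocSemiring K]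
    {S : Set (ι → K)} {c : ι → K} (hc : c ≠ 0) (hS : ∀ u ∈ S, ∀ u' ∈ S, u ⬝ᵥ c = u' ⬝ᵥ c) :
    ¬ IsBlack S := by
  classical
  rintro rfl
  refine hc (funext fun i => ?_)
  simpa using hS (Pi.single i 1) trivial 0 trivial

theorem brickProj_vecMul_dotProduct_eq {v v' : Fin (m * δ) → ZMod 2} (ha : nw ≤ δ)
    (hΛ : subColBlock m δ Λ nw ha j *ᵥ c = 0)
    (hv : v ∈ StdSet m δ nw nr w R) (hv' : v' ∈ StdSet m δ nw nr w R) :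
    brickProj m δ (v ᵥ* Λ) j ⬝ᵥ c = brickProj m δ (v' ᵥ* Λ) j ⬝ᵥ c := by
  let columns : Matrix (Fin (m * δ)) (Fin m) (ZMod 2) := Λ.submatrix id (brickIdx m δ j)
  change v ᵥ* columns ⬝ᵥ c = v' ᵥ* columns ⬝ᵥ c
  rw [← dotProduct_mulVec, ← dotProduct_mulVec]
  refine Finset.sum_congr rfl fun k _ => ?_
  rcases lt_or_ge (k : ℕ) (m * nw) with hk | hk
  · rw [apply_eq_apply_of_mem_stdSet hv hv' hk]
  · obtain ⟨r, rfl⟩ := exists_shiftIdx_eq ha hk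
    have hr : (columns *ᵥ c) (shiftIdx m δ nw ha r) = 0 := congrFun hΛ r
    rw [hr, mul_zero, mul_zero]

theorem not_isBlack_box_image_stdSet (ha : nw ≤ δ) (hc : c ≠ 0)
    (hΛ : subColBlock m δ Λ nw ha j *ᵥ c = 0) :
    ¬ IsBlack (box m δ ((fun v => v ᵥ* Λ) '' StdSet m δ nw nr w R) j) := by
  refine not_isBlack_of_dotProduct_const hc ?_
  rintro _ ⟨_, ⟨v, hv, rfl⟩, rfl⟩ _ ⟨_, ⟨v', hv', rfl⟩, rfl⟩
  exact brickProj_vecMul_dotProduct_eq ha hΛ hv hv'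

theorem StdForm.not_sameType_image_vecMul (hD : StdForm m δ D nw nr nb) (hj : nw + nr ≤ j)
    (ha : nw ≤ δ) (hc : c ≠ 0) (hΛ : subColBlock m δ Λ nw ha j *ᵥ c = 0) :
    ¬ SameType m δ D ((fun v => v ᵥ* Λ) '' D) := by
  have hne := hD.nonempty
  obtain ⟨-, -, w, R, -, rfl⟩ := hD
  exact fun h => not_isBlack_box_image_stdSet ha hc hΛ ((h j).2.1 (isBlack_box_stdSet hne hj))

end ColumnRelation

theorem stdForm_stdSet_zero {m δ nw nb : ℕ} (h : nw + nb = δ) (w : Fin δ → Fin m → ZMod 2)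
    (R : Set (Fin m → ZMod 2)) : StdForm m δ (StdSet m δ nw 0 w R) nw 0 nb :=
  ⟨h, zero_le_one, w, R, fun h => absurd h zero_ne_one, rfl⟩

theorem subColBlock_presentMatrix_mulVec_single :
    subColBlock 4 16 presentMatrix 15 (by norm_num) 15 *ᵥ Pi.single 0 1 = 0 := by
  have hcol : ∀ r, subColBlock 4 16 presentMatrix 15 (by norm_num) 15 r 0 = 0 := by decide
  rw [mulVec_single_one]
  exact funext hcol

/-- **PRESENT.** With `m = 4`, `δ = 16`, `n = 64`, the PRESENT bit
permutation matrix is non-type-preserving: some subset `D ⊆ 𝔽₂⁶⁴` in standard form of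
non-trivial type has `type(DP) ≠ type(D)`. -/
theorem stmt_13 :
    ∃ (D : Set (Fin (4 * 16) → ZMod 2)) (nw nr nb : ℕ),
      StdForm 4 16 D nw nr nb ∧ nw ≠ 16 ∧ nb ≠ 16 ∧
      ¬ SameType 4 16 D ((fun v => Matrix.vecMul v presentMatrix) '' D) := by
  have hD : StdForm 4 16 (StdSet 4 16 15 0 0 ∅) 15 0 1 := stdForm_stdSet_zero rfl 0 ∅
  have hc : (Pi.single 0 1 : Fin 4 → ZMod 2) ≠ 0 := Pi.single_ne_zero_iff.mpr one_ne_zero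
  exact ⟨_, 15, 0, 1, hD, by norm_num, by norm_num,
    hD.not_sameType_image_vecMul (j := 15) le_rfl _ hc subColBlock_presentMatrix_mulVec_single⟩
end

section
/- Let m > 1, δ ≥ 3, q = 2^m, and let M be a δ × δ MDS matrix over the field 𝔽_q, i.e. every square submatrix of M is invertible. Then M, regarded as a mixing layer on V = (𝔽_q)^δ acting on row vectors on the right, is non-type-preserving: there exists a subset D ⊆ (𝔽_q)^δ in standard form of non-trivial type such that the type of DM differs from the type of D. -/
/-- The `j`-th box of `D ⊆ F^δ`: the projection of `D` on the `j`-th coordinate. -/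
def boxQ {F : Type*} (δ : ℕ) (D : Set (Fin δ → F)) (j : Fin δ) : Set F :=
  (fun v => v j) '' D

/-- The set `{v_w} × R × F^{n_b}` in standard form: the first `nw` coordinates are fixed
(equal to `w`), coordinate number `nw` (0-indexed) lies in `R` when `nr = 1`, and the
remaining coordinates are free. -/
def StdSetQ {F : Type*} (δ nw nr : ℕ) (w : Fin δ → F) (R : Set F) : Set (Fin δ → F) :=
  { v | (∀ j : Fin δ, (j : ℕ) < nw → v j = w j) ∧
        (nr = 1 → ∀ j : Fin δ, (j : ℕ) = nw → v j ∈ R) }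

/-- `D` is in standard form of type `(nw, nr, nb)`. -/
def StdFormQ {F : Type*} [Fintype F] (δ : ℕ) (D : Set (Fin δ → F)) (nw nr nb : ℕ) : Prop :=
  nw + nr + nb = δ ∧ nr ≤ 1 ∧
  ∃ (w : Fin δ → F) (R : Set F),
    (nr = 1 → 2 ≤ R.ncard ∧ R.ncard ≤ Fintype.card F - 1) ∧ D = StdSetQ δ nw nr w R

/-- `D` and `E` have the same type: corresponding boxes have the same kind. -/
def SameTypeQ {F : Type*} (δ : ℕ) (D E : Set (Fin δ → F)) : Prop :=
  ∀ j : Fin δ,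
    (IsWhite (boxQ δ D j) ↔ IsWhite (boxQ δ E j)) ∧
    (IsBlack (boxQ δ D j) ↔ IsBlack (boxQ δ E j))

/-!
Suppose an entry `M i j` strictly below the diagonal is nonzero. The set `D = {0}^i × F^(δ-i)` is
in standard form and its `j`-th box is white, as `j < i`. It contains both `0` and the standard
basis vector `e_i`, whose images under `M` have `j`-th coordinates `0` and `M i j`; so the `j`-th
box of `DM` is not white. An MDS matrix has no zero entries, its `1 × 1` submatrices being
invertible, so it has such an entry as soon as `δ ≥ 2`.
-/

section Boxes

variable {F : Type*} {δ nw : ℕ} {w : Fin δ → F} {R : Set F} {j : Fin δ}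

theorem isWhite_iff_nonempty_and_subsingleton {α : Type*} {S : Set α} :
    IsWhite S ↔ S.Nonempty ∧ S.Subsingleton :=
  Set.exists_eq_singleton_iff_nonempty_subsingleton

theorem not_isWhite_boxQ {E : Set (Fin δ → F)} {u v : Fin δ → F} (hu : u ∈ E) (hv : v ∈ E)
    (huv : u j ≠ v j) : ¬ IsWhite (boxQ δ E j) := fun hE =>
  huv ((isWhite_iff_nonempty_and_subsingleton.1 hE).2 ⟨u, hu, rfl⟩ ⟨v, hv, rfl⟩)

theorem isWhite_boxQ_stdSetQ {nr : ℕ} (hne : (StdSetQ δ nw nr w R).Nonempty)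
    (hj : (j : ℕ) < nw) : IsWhite (boxQ δ (StdSetQ δ nw nr w R) j) := by
  refine isWhite_iff_nonempty_and_subsingleton.2 ⟨hne.image _, ?_⟩
  rintro _ ⟨u, hu, rfl⟩ _ ⟨v, hv, rfl⟩
  exact (hu.1 j hj).trans (hv.1 j hj).symm

theorem mem_stdSetQ_zero {v : Fin δ → F} :
    v ∈ StdSetQ δ nw 0 w R ↔ ∀ k : Fin δ, (k : ℕ) < nw → v k = w k := by
  simp [StdSetQ]

theorem stdFormQ_stdSetQ_zero [Fintype F] (hnw : nw ≤ δ) :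
    StdFormQ δ (StdSetQ δ nw 0 w R) nw 0 (δ - nw) :=
  ⟨by omega, zero_le_one, w, R, fun h => absurd h zero_ne_one, rfl⟩

end Boxes

section UnitSubmatrix

variable {m n ι S : Type*} [Unique ι] [Fintype ι] [DecidableEq ι] [CommRing S]

theorem isUnit_apply_of_isUnit_submatrix {M : Matrix m n S} {r : ι → m} {c : ι → n}
    (h : IsUnit (M.submatrix r c)) : IsUnit (M (r default) (c default)) := by
  simpa only [Matrix.isUnit_iff_isUnit_det, Matrix.det_unique, Matrix.submatrix_apply] using h

theorem not_blockTriangular_of_isUnit_submatrix [Nontrivial S] {α : Type*} [LT α]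
    {M : Matrix m m S} {b : m → α} {r c : ι → m} (h : IsUnit (M.submatrix r c))
    (hb : b (c default) < b (r default)) : ¬ M.BlockTriangular b := fun hM =>
  (isUnit_apply_of_isUnit_submatrix h).ne_zero (hM hb)

end UnitSubmatrix

theorem stmt_14_general {δ : ℕ} {F : Type*} [NonAssocSemiring F] [Fintype F]
    (M : Matrix (Fin δ) (Fin δ) F) (hM : ¬ M.BlockTriangular id) :
    ∃ (D : Set (Fin δ → F)) (nw nr nb : ℕ),
      StdFormQ δ D nw nr nb ∧ nw ≠ δ ∧ nb ≠ δ ∧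
      ¬ SameTypeQ δ D ((fun v => Matrix.vecMul v M) '' D) := by
  obtain ⟨i, j, hji, hij⟩ : ∃ i j, j < i ∧ M i j ≠ 0 := by
    simpa [Matrix.BlockTriangular] using hM
  let D : Set (Fin δ → F) := StdSetQ δ i 0 0 ∅
  have zero_mem : 0 ∈ D := mem_stdSetQ_zero.2 fun _ _ => rfl
  have single_mem : Pi.single i 1 ∈ D :=
    mem_stdSetQ_zero.2 fun _ hk => Pi.single_eq_of_ne (Fin.ne_of_lt hk) 1
  have white : IsWhite (boxQ δ D j) := isWhite_boxQ_stdSetQ ⟨0, zero_mem⟩ hji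
  have not_white : ¬ IsWhite (boxQ δ ((fun v => Matrix.vecMul v M) '' D) j) :=
    not_isWhite_boxQ (Set.mem_image_of_mem _ single_mem) (Set.mem_image_of_mem _ zero_mem)
      (by simpa using hij)
  exact ⟨D, i, 0, δ - i, stdFormQ_stdSetQ_zero i.isLt.le, by omega, by omega,
    fun same => not_white ((same j).1.1 white)⟩

/-- **MDS matrices.** Let `q = 2^m` with `m > 1`, `δ ≥ 3`, and let `M` be a
`δ × δ` MDS matrix over `𝔽_q` (every square submatrix is invertible).  Then `M` is
non-type-preserving: some subset `D ⊆ (𝔽_q)^δ` in standard form of non-trivial type has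
`type(DM) ≠ type(D)`. -/
theorem stmt_14 (m : ℕ) (hm : 1 < m) (δ : ℕ) (hδ : 3 ≤ δ)
    (F : Type) [Field F] [Fintype F] (hF : Fintype.card F = 2 ^ m)
    (M : Matrix (Fin δ) (Fin δ) F)
    (hMDS : ∀ (k : ℕ) (r c : Fin k → Fin δ), Function.Injective r → Function.Injective c →
      IsUnit (M.submatrix r c)) :
    ∃ (D : Set (Fin δ → F)) (nw nr nb : ℕ),
      StdFormQ δ D nw nr nb ∧ nw ≠ δ ∧ nb ≠ δ ∧
      ¬ SameTypeQ δ D ((fun v => Matrix.vecMul v M) '' D) := by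
  have below_diagonal := hMDS 1 (fun _ => ⟨1, by omega⟩) (fun _ => ⟨0, by omega⟩)
    (Function.injective_of_subsingleton _) (Function.injective_of_subsingleton _)
  exact stmt_14_general M
    (not_blockTriangular_of_isUnit_submatrix below_diagonal Nat.zero_lt_one)
end

section
/- Let m = 4, δ = 4, n = 16, and let Λ ∈ GL₁₆(𝔽₂) be the GPig2 mixing layer: the permutation matrix whose row number 4(i−1)+j is the standard basis row vector 𝐞_{4(j−1)+i}, for all 1 ≤ i, j ≤ 4 (the bit permutation transposing the 4×4 array of bits). Then Λ is non-type-preserving: there exists a subset D ⊆ 𝔽₂¹⁶ in standard form of non-trivial type such that the type of DΛ differs from the type of D. -/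
/-!
Suppose the block `Λ_{j,k}` of a matrix `Λ` is nonzero, brick `k` of a standard form `D` is fixed
and brick `j` is free. Adding to a vector of `D` the basis vector of a bit of brick `j` stays in
`D`, and it adds the corresponding row of `Λ_{j,k}` to brick `k` of the image. So box `k`, white
for `D`, is not white for `DΛ`. The GPig2 layer transposes the array of bits, hence sends a bit of
every brick to every brick: all its blocks are nonzero.
-/

open Matrix

/-- The GPig2 mixing layer: the permutation matrix of the bit permutation transposing the
`4 × 4` array of bits; 0-indexed, row `r` has its `1` in column `4·(r mod 4) + r/4`. -/
def gpig2Matrix : Matrix (Fin (4 * 4)) (Fin (4 * 4)) (ZMod 2) :=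
  Matrix.of fun r c => if (c : ℕ) = 4 * ((r : ℕ) % 4) + (r : ℕ) / 4 then 1 else 0

section Bricks

variable {m δ : ℕ}

lemma brickIdx_injective2 : Function.Injective2 (brickIdx m δ) := by
  intro j k i i' h
  have hval : m * (j : ℕ) + i = m * k + i' := congrArg Fin.val h
  have hjk : (j : ℕ) = k := by
    simpa [Nat.mul_add_div i.pos, Nat.div_eq_of_lt] using congrArg (· / m) hval
  rw [hjk] at hval
  exact ⟨Fin.ext hjk, Fin.ext (Nat.add_left_cancel hval)⟩

lemma brickProj_add (u v : Fin (m * δ) → ZMod 2) (j : Fin δ) :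
    brickProj m δ (u + v) j = brickProj m δ u j + brickProj m δ v j :=
  rfl

lemma brickProj_single_of_ne {j k : Fin δ} (hkj : k ≠ j) (i : Fin m) (a : ZMod 2) :
    brickProj m δ (Pi.single (brickIdx m δ j i) a) k = 0 := by
  funext i'
  have hne : brickIdx m δ k i' ≠ brickIdx m δ j i := fun h => hkj (brickIdx_injective2 h).1
  exact Pi.single_eq_of_ne (M := fun _ => ZMod 2) hne a

lemma brickProj_single_one_vecMul (Λ : Matrix (Fin (m * δ)) (Fin (m * δ)) (ZMod 2))
    (j k : Fin δ) (i : Fin m) :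
    brickProj m δ (Pi.single (brickIdx m δ j i) 1 ᵥ* Λ) k = block m δ Λ j k i := by
  rw [single_one_vecMul]
  rfl

end Bricks

section StdSet

variable {m δ nw nr : ℕ} {w : Fin δ → Fin m → ZMod 2} {R : Set (Fin m → ZMod 2)}

lemma box_stdSet_of_lt (hne : (StdSet m δ nw nr w R).Nonempty) {k : Fin δ} (hk : (k : ℕ) < nw) :
    box m δ (StdSet m δ nw nr w R) k = {w k} :=
  (hne.image _).subset_singleton_iff.1 (Set.image_subset_iff.2 fun _ hv => hv.1 k hk)

lemma add_single_mem_stdSet {v : Fin (m * δ) → ZMod 2} (hv : v ∈ StdSet m δ nw nr w R)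
    {j : Fin δ} (hj : nw + nr ≤ j) (i : Fin m) (a : ZMod 2) :
    v + Pi.single (brickIdx m δ j i) a ∈ StdSet m δ nw nr w R := by
  have brickProj_eq {k : Fin δ} (hkj : (k : ℕ) < j) :
      brickProj m δ (v + Pi.single (brickIdx m δ j i) a) k = brickProj m δ v k := by
    rw [brickProj_add, brickProj_single_of_ne (Fin.ne_of_lt hkj), add_zero]
  refine ⟨fun k hk => ?_, fun hnr k hk => ?_⟩
  · rw [brickProj_eq (by omega)]
    exact hv.1 k hk
  · rw [brickProj_eq (by omega)]
    exact hv.2 hnr k hk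

lemma not_isWhite_box_image_vecMul_stdSet (hne : (StdSet m δ nw nr w R).Nonempty)
    {Λ : Matrix (Fin (m * δ)) (Fin (m * δ)) (ZMod 2)} {j k : Fin δ} (hj : nw + nr ≤ j)
    (hΛ : block m δ Λ j k ≠ 0) :
    ¬ IsWhite (box m δ ((fun v => v ᵥ* Λ) '' StdSet m δ nw nr w R) k) := by
  rintro ⟨b, hb⟩
  obtain ⟨v, hv⟩ := hne
  have brickProj_eq {u : Fin (m * δ) → ZMod 2} (hu : u ∈ StdSet m δ nw nr w R) :
      brickProj m δ (u ᵥ* Λ) k = b :=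
    hb.subset (Set.mem_image_of_mem _ (Set.mem_image_of_mem _ hu))
  refine hΛ (funext fun i => ?_)
  have hshift := brickProj_eq (add_single_mem_stdSet hv hj i 1)
  rwa [add_vecMul, brickProj_add, brickProj_eq hv, brickProj_single_one_vecMul,
    add_eq_left] at hshift

theorem not_sameType_image_vecMul_stdSet (hne : (StdSet m δ nw nr w R).Nonempty)
    {Λ : Matrix (Fin (m * δ)) (Fin (m * δ)) (ZMod 2)} {j k : Fin δ} (hj : nw + nr ≤ j)
    (hk : (k : ℕ) < nw) (hΛ : block m δ Λ j k ≠ 0) :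
    ¬ SameType m δ (StdSet m δ nw nr w R) ((fun v => v ᵥ* Λ) '' StdSet m δ nw nr w R) :=
  fun h => not_isWhite_box_image_vecMul_stdSet hne hj hΛ ((h k).1.1 ⟨w k, box_stdSet_of_lt hne hk⟩)

end StdSet

lemma block_gpig2Matrix_ne_zero (j k : Fin 4) : block 4 4 gpig2Matrix j k ≠ 0 := by
  have entry_eq_one : block 4 4 gpig2Matrix j k k j = 1 := by
    refine if_pos ?_
    simp only [brickIdx]
    omega
  intro h
  rw [h] at entry_eq_one
  exact zero_ne_one entry_eq_one

/-- **GPig2.** With `m = 4`, `δ = 4`, `n = 16`, the GPig2 mixing layer is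
non-type-preserving: some subset `D ⊆ 𝔽₂¹⁶` in standard form of non-trivial type has
`type(DΛ) ≠ type(D)`. -/
theorem stmt_16 :
    ∃ (D : Set (Fin (4 * 4) → ZMod 2)) (nw nr nb : ℕ),
      StdForm 4 4 D nw nr nb ∧ nw ≠ 4 ∧ nb ≠ 4 ∧
      ¬ SameType 4 4 D ((fun v => Matrix.vecMul v gpig2Matrix) '' D) := by
  have hne : (StdSet 4 4 1 0 0 ∅).Nonempty := ⟨0, fun _ _ => rfl, by simp⟩
  refine ⟨StdSet 4 4 1 0 0 ∅, 1, 0, 3, ⟨rfl, zero_le_one, 0, ∅, by simp, rfl⟩,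
    by decide, by decide, ?_⟩
  exact not_sameType_image_vecMul_stdSet (j := 1) (k := 0) hne le_rfl zero_lt_one
    (block_gpig2Matrix_ne_zero 1 0)
end
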